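/- Let A ∈ ℝ^{m×k} have full column rank with thin SVD A = U_A Σ_A V_Aᵀ, let b ∈ ℝ^m, let x_nls = argmin_{x ≥ 0} ‖Ax − b‖₂ with residual r_nls = A x_nls − b and ℛ_nls = ‖r_nls‖₂. Let 𝓘_D ⊆ {1,…,m} be a deterministic index set, θ = Σ_{i∈𝓘_D} l_i(A), ξ = k − θ, and let S_H be the hybrid sampling matrix for A with s_R random samples. Fix ε_r, δ ∈ (0,1). If s_R ≥ 2ξ/(δ ε_r), then with probability at least 1 − δ, ‖U_Aᵀ r_nls − U_Aᵀ S_Hᵀ S_H r_nls‖₂² ≤ ε_r ℛ_nls²/2. -/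

import Mathlib

/-!
The bound is Markov's inequality applied to the squared error of an unbiased estimator.

The deterministic rows of the hybrid sampling matrix reproduce the contribution of the indices in
`ID` exactly, and each random row contributes `X_j (ω t) / s_R` to the `j`-th coordinate of the
sampled product, where `X_j i = U i j * r i / p_i` (`hybrid_error`). Since `p_i = 0` outside `ID`
only if the row `U i` vanishes, `X_j` has mean `∑_{i ∉ ID} U i j * r i`, so the `j`-th coordinate
of the error is an average of `s_R` centred i.i.d. variables. Its second moment is at most
`E[X_j ^ 2] / s_R` (`draw_second_moment`). Summing over `j`, the leverage score probabilities
cancel the leverage scores, which gives `E ‖error‖² ≤ (ξ / s_R) ‖r‖² ≤ δ * (εr ‖r‖² / 2)`,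
and Markov's inequality (`prob_ge_of_mean_le`) concludes.
-/

open Matrix

/-- Euclidean norm of a real vector. -/
noncomputable def vnorm {ι : Type*} [Fintype ι] (x : ι → ℝ) : ℝ :=
  Real.sqrt (∑ i, x i ^ 2)

/-- The hybrid sampling matrix: the first `s_D` rows deterministically select the rows
`e j`, and the `s_R` random rows sample-and-rescale according to the draw `ω` with
probabilities `ptil`. -/
noncomputable def hybridMatrix {m sD sR : ℕ} (e : Fin sD → Fin m) (ptil : Fin m → ℝ)
    (ω : Fin sR → Fin m) : Matrix (Fin sD ⊕ Fin sR) (Fin m) ℝ :=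
  Matrix.of (Sum.elim
    (fun j i => if i = e j then (1 : ℝ) else 0)
    (fun j i => if ω j = i then 1 / Real.sqrt ((sR : ℝ) * ptil i) else 0))

open Classical in
/-- Probability of an event `E` of draws `ω : Fin sR → Fin m`, where the `s_R` draws are
i.i.d. with `P(draw = i) = ptil i`. -/
noncomputable def prob {m sR : ℕ} (ptil : Fin m → ℝ) (E : Set (Fin sR → Fin m)) : ℝ :=
  ∑ ω : Fin sR → Fin m, if ω ∈ E then ∏ j, ptil (ω j) else 0

lemma vnorm_sq {ι : Type*} [Fintype ι] (x : ι → ℝ) : vnorm x ^ 2 = ∑ i, x i ^ 2 :=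
  Real.sq_sqrt (Finset.sum_nonneg fun _ _ => sq_nonneg _)

lemma sum_draws_succ {m s : ℕ} (F : (Fin (s + 1) → Fin m) → ℝ) :
    ∑ ω, F ω = ∑ i : Fin m, ∑ ω : Fin s → Fin m, F (Fin.cons i ω) := by
  rw [← Fintype.sum_prod_type']
  exact (Fintype.sum_equiv (Fin.consEquiv (fun _ : Fin (s + 1) => Fin m)) _ _
    (fun x => rfl)).symm

lemma draw_mass {m : ℕ} (p : Fin m → ℝ) (hp : ∑ i, p i = 1) (s : ℕ) :
    ∑ ω : Fin s → Fin m, ∏ t, p (ω t) = 1 := by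
  induction s with
  | zero => simp
  | succ s ih =>
    rw [sum_draws_succ]
    simp [Fin.prod_univ_succ, ← Finset.mul_sum, ih, hp]

/-- The variance of a sum of `s` centred i.i.d. draws is `s` times that of one draw. -/
lemma draw_second_moment {m : ℕ} (p Y : Fin m → ℝ) (hp : ∑ i, p i = 1)
    (hY : ∑ i, p i * Y i = 0) (s : ℕ) :
    ∑ ω : Fin s → Fin m, (∏ t, p (ω t)) * (∑ t, Y (ω t)) ^ 2
      = s * ∑ i, p i * Y i ^ 2 := by
  induction s with
  | zero => simp
  | succ s ih =>
    rw [sum_draws_succ]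
    simp only [Fin.prod_univ_succ, Fin.sum_univ_succ, Fin.cons_zero, Fin.cons_succ]
    have h : ∀ i : Fin m, ∑ ω : Fin s → Fin m,
        p i * (∏ t, p (ω t)) * (Y i + ∑ t, Y (ω t)) ^ 2
        = p i * Y i ^ 2
          + p i * Y i * (2 * ∑ ω : Fin s → Fin m, (∏ t, p (ω t)) * ∑ t, Y (ω t))
          + p i * (s * ∑ i, p i * Y i ^ 2) := by
      intro i
      rw [← ih, ← mul_one (p i * Y i ^ 2), ← draw_mass p hp s]
      simp only [Finset.mul_sum, ← Finset.sum_add_distrib]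
      refine Finset.sum_congr rfl fun ω _ => ?_
      simp only [← Finset.mul_sum]
      ring
    rw [Finset.sum_congr rfl fun i _ => h i, Finset.sum_add_distrib, Finset.sum_add_distrib,
      ← Finset.sum_mul, ← Finset.sum_mul, hY, hp]
    push_cast
    ring

/-- Markov's inequality for the product distribution of the draws. -/
lemma prob_ge_of_mean_le {m s : ℕ} (p : Fin m → ℝ) (hp0 : ∀ i, 0 ≤ p i) (hp : ∑ i, p i = 1)
    (Z : (Fin s → Fin m) → ℝ) (hZ : ∀ ω, 0 ≤ Z ω) (c δ : ℝ) (hc : 0 < c)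
    (hE : ∑ ω, (∏ t, p (ω t)) * Z ω ≤ δ * c) :
    prob p {ω | Z ω ≤ c} ≥ 1 - δ := by
  have key : ∀ ω : Fin s → Fin m, (∏ t, p (ω t)) - (∏ t, p (ω t)) * Z ω / c
      ≤ if Z ω ≤ c then ∏ t, p (ω t) else 0 := by
    intro ω
    have hw : 0 ≤ ∏ t, p (ω t) := Finset.prod_nonneg fun _ _ => hp0 _
    split_ifs with h
    · have := div_nonneg (mul_nonneg hw (hZ ω)) hc.le
      linarith
    · rw [sub_nonpos, le_div_iff₀ hc]
      exact mul_le_mul_of_nonneg_left (not_le.mp h).le hw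
  have h := Finset.sum_le_sum fun ω (_ : ω ∈ Finset.univ) => key ω
  rw [Finset.sum_sub_distrib, draw_mass p hp, ← Finset.sum_div] at h
  have h2 : (∑ ω, (∏ t, p (ω t)) * Z ω) / c ≤ δ := (div_le_iff₀ hc).mpr hE
  unfold prob
  simp only [Set.mem_ofPred_eq]
  refine ge_iff_le.mpr (le_trans (by linarith) (h.trans (le_of_eq ?_)))
  exact Finset.sum_congr rfl fun ω _ => by congr

/-- The action of `S_Hᵀ S_H` against a test vector `u`: the deterministic rows restrict to `ID`,
the random rows form the importance sampling average. Division by a vanishing probability is `0`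
on both sides. -/
lemma hybrid_apply {m sD sR : ℕ} (u r : Fin m → ℝ) (ID : Finset (Fin m)) (hID : ID.card = sD)
    (e : Fin sD → Fin m) (he : Function.Injective e) (heID : ∀ j, e j ∈ ID)
    (p : Fin m → ℝ) (hp0 : ∀ i, 0 ≤ p i) (ω : Fin sR → Fin m) :
    ∑ i, u i * ((hybridMatrix e p ω)ᵀ.mulVec ((hybridMatrix e p ω).mulVec r)) i
      = ∑ i ∈ ID, u i * r i + (1 / (sR : ℝ)) * ∑ t, u (ω t) * r (ω t) / p (ω t) := by
  have himg : Finset.univ.image e = ID := by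
    apply Finset.eq_of_subset_of_card_le
    · intro i hi
      obtain ⟨j, -, rfl⟩ := Finset.mem_image.mp hi
      exact heID j
    · rw [Finset.card_image_of_injective _ he, hID]
      simp
  have hdual : ∑ i, u i * ((hybridMatrix e p ω)ᵀ.mulVec ((hybridMatrix e p ω).mulVec r)) i
      = ∑ a, (hybridMatrix e p ω).mulVec u a * (hybridMatrix e p ω).mulVec r a := by
    change u ⬝ᵥ _ = (hybridMatrix e p ω).mulVec u ⬝ᵥ _
    rw [Matrix.dotProduct_mulVec, Matrix.vecMul_transpose]
  have hl : ∀ (v : Fin m → ℝ) j, (hybridMatrix e p ω).mulVec v (Sum.inl j) = v (e j) := by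
    intro v j
    simp [hybridMatrix, Matrix.mulVec, dotProduct]
  have hr : ∀ (v : Fin m → ℝ) t, (hybridMatrix e p ω).mulVec v (Sum.inr t)
      = 1 / Real.sqrt ((sR : ℝ) * p (ω t)) * v (ω t) := by
    intro v t
    simp [hybridMatrix, Matrix.mulVec, dotProduct]
  rw [hdual, Fintype.sum_sum_type]
  simp only [hl, hr]
  rw [← himg, Finset.sum_image fun a _ b _ h => he h, Finset.mul_sum]
  congr 1
  refine Finset.sum_congr rfl fun t _ => ?_
  have hs : Real.sqrt ((sR : ℝ) * p (ω t)) * Real.sqrt ((sR : ℝ) * p (ω t)) = sR * p (ω t) :=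
    Real.mul_self_sqrt (mul_nonneg (Nat.cast_nonneg _) (hp0 _))
  calc _ = u (ω t) * r (ω t) *
        (Real.sqrt ((sR : ℝ) * p (ω t)) * Real.sqrt ((sR : ℝ) * p (ω t)))⁻¹ := by
          rw [mul_inv]; ring
    _ = _ := by rw [hs, mul_inv]; ring

/-- The `j`-th coordinate of the sampling error, for the `j`-th column `u` of `U`, is an average
of i.i.d. terms `μ - X i` with `μ = ∑ i ∈ IDᶜ, u i * r i` and `X i = u i * r i / p i`. -/
lemma hybrid_error {m sD sR : ℕ} (hs : 0 < sR) (u r : Fin m → ℝ) (ID : Finset (Fin m))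
    (hID : ID.card = sD)
    (e : Fin sD → Fin m) (he : Function.Injective e) (heID : ∀ j, e j ∈ ID)
    (p : Fin m → ℝ) (hp0 : ∀ i, 0 ≤ p i) (ω : Fin sR → Fin m) :
    ∑ i, u i * r i
      - ∑ i, u i * ((hybridMatrix e p ω)ᵀ.mulVec ((hybridMatrix e p ω).mulVec r)) i
      = (1 / (sR : ℝ)) * ∑ t, (∑ i ∈ IDᶜ, u i * r i - u (ω t) * r (ω t) / p (ω t)) := by
  have hs' : (sR : ℝ) ≠ 0 := by positivity
  rw [hybrid_apply u r ID hID e he heID p hp0 ω, ← Finset.sum_add_sum_compl ID,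
    Finset.sum_sub_distrib]
  simp only [Finset.sum_const, Finset.card_univ, Fintype.card_fin, nsmul_eq_mul]
  field_simp
  ring

/-- second structural condition for hybrid leverage score sampling.
With leverage scores `l_i(A) = ‖U_A[i,:]‖₂²`, deterministic index set `𝓘_D`,
`θ = Σ_{i∈𝓘_D} l_i(A)`, `ξ = k − θ`, NLS residual `r_nls = A x_nls − b` with
`ℛ_nls = ‖r_nls‖₂`, and `s_R ≥ 2ξ/(δ ε_r)`, with probability at least `1 − δ`,
`‖U_Aᵀ r_nls − U_Aᵀ S_Hᵀ S_H r_nls‖₂² ≤ ε_r ℛ_nls²/2`. -/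
theorem stmt7 {m k sD sR : ℕ}
    (A U : Matrix (Fin m) (Fin k) ℝ) (Sig V : Matrix (Fin k) (Fin k) ℝ)
    (hrank : A.rank = k)
    (hU : Uᵀ * U = (1 : Matrix (Fin k) (Fin k) ℝ))
    (hSigDiag : ∀ i j, i ≠ j → Sig i j = 0) (hSigPos : ∀ i, 0 < Sig i i)
    (hV : Vᵀ * V = (1 : Matrix (Fin k) (Fin k) ℝ))
    (hSVD : A = U * Sig * Vᵀ)
    (b : Fin m → ℝ)
    (xnls : Fin k → ℝ) (hx0 : ∀ i, 0 ≤ xnls i)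
    (hxmin : ∀ x : Fin k → ℝ, (∀ i, 0 ≤ x i) →
      vnorm (A.mulVec xnls - b) ≤ vnorm (A.mulVec x - b))
    (r : Fin m → ℝ) (hr : r = A.mulVec xnls - b)
    (ID : Finset (Fin m)) (hID : ID.card = sD)
    (e : Fin sD → Fin m) (he : Function.Injective e) (heID : ∀ j, e j ∈ ID)
    (θ ξ : ℝ) (hθ : θ = ∑ i ∈ ID, ∑ j, U i j ^ 2) (hξ : ξ = (k : ℝ) - θ) (hξpos : 0 < ξ)
    (ptil : Fin m → ℝ)
    (hptil : ∀ i, ptil i = if i ∈ ID then 0 else (∑ j, U i j ^ 2) / ξ)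
    (εr δ : ℝ) (hεr : εr ∈ Set.Ioo (0 : ℝ) 1) (hδ : δ ∈ Set.Ioo (0 : ℝ) 1)
    (hsR : (sR : ℝ) ≥ 2 * ξ / (δ * εr)) :
    prob ptil {ω : Fin sR → Fin m |
        vnorm (Uᵀ.mulVec r
            - Uᵀ.mulVec ((hybridMatrix e ptil ω)ᵀ.mulVec
                ((hybridMatrix e ptil ω).mulVec r))) ^ 2
          ≤ εr * vnorm r ^ 2 / 2}
      ≥ 1 - δ := by
  obtain ⟨hε0, -⟩ := hεr
  obtain ⟨hδ0, -⟩ := hδ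
  have hsR0 : (0 : ℝ) < sR := lt_of_lt_of_le (by positivity) hsR
  have hsN : 0 < sR := by exact_mod_cast hsR0
  have hl0 : ∀ i, 0 ≤ ∑ j, U i j ^ 2 := fun i => Finset.sum_nonneg fun _ _ => sq_nonneg _
  have hp0 : ∀ i, 0 ≤ ptil i := by
    intro i
    rw [hptil]
    split_ifs
    · exact le_rfl
    · exact div_nonneg (hl0 i) hξpos.le
  -- The leverage scores add up to `trace (Uᵀ U) = k`.
  have htot : ∑ i, ∑ j, U i j ^ 2 = (k : ℝ) := by
    have h : ∀ j, ∑ i, U i j ^ 2 = 1 := by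
      intro j
      have := congrFun (congrFun hU j) j
      simpa [Matrix.mul_apply, sq] using this
    rw [Finset.sum_comm]
    simp [h]
  have hcompl : ∑ i ∈ IDᶜ, ∑ j, U i j ^ 2 = ξ := by
    have := Finset.sum_add_sum_compl ID fun i => ∑ j, U i j ^ 2
    rw [htot] at this
    rw [hξ, hθ]
    linarith
  -- Sums weighted by `ptil` only see the complement of `ID`.
  have hsplit : ∀ f : Fin m → ℝ, ∑ i, ptil i * f i = ∑ i ∈ IDᶜ, ptil i * f i := by
    intro f
    rw [← Finset.sum_add_sum_compl ID, Finset.sum_eq_zero, zero_add]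
    intro i hi
    simp [hptil, hi]
  have hpc : ∀ i ∈ IDᶜ, ptil i = (∑ j, U i j ^ 2) / ξ := by
    intro i hi
    rw [hptil, if_neg (Finset.mem_compl.mp hi)]
  have hp1 : ∑ i, ptil i = 1 := by
    have := hsplit fun _ => 1
    simp only [mul_one] at this
    rw [this, Finset.sum_congr rfl hpc, ← Finset.sum_div, hcompl, div_self hξpos.ne']
  have hUz : ∀ i ∈ IDᶜ, ptil i = 0 → ∀ j, U i j = 0 := by
    intro i hi h j
    rw [hpc i hi, div_eq_zero_iff, or_iff_left hξpos.ne'] at h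
    have := (Finset.sum_eq_zero_iff_of_nonneg fun j _ => sq_nonneg (U i j)).mp h j
      (Finset.mem_univ j)
    exact pow_eq_zero_iff two_ne_zero |>.mp this
  set μ : Fin k → ℝ := fun j => ∑ i ∈ IDᶜ, U i j * r i with hμ
  set X : Fin k → Fin m → ℝ := fun j i => U i j * r i / ptil i with hX
  have hmean : ∀ j, ∑ i, ptil i * X j i = μ j := by
    intro j
    rw [hsplit]
    refine Finset.sum_congr rfl fun i hi => ?_
    by_cases h : ptil i = 0
    · simp [h, hUz i hi h j]
    · simp only [hX]
      field_simp
  have herr : ∀ ω : Fin sR → Fin m, vnorm (Uᵀ.mulVec r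
            - Uᵀ.mulVec ((hybridMatrix e ptil ω)ᵀ.mulVec
                ((hybridMatrix e ptil ω).mulVec r))) ^ 2
      = ∑ j, (1 / (sR : ℝ)) ^ 2 * (∑ t, (μ j - X j (ω t))) ^ 2 := by
    intro ω
    rw [vnorm_sq]
    refine Finset.sum_congr rfl fun j _ => ?_
    rw [← mul_pow]
    congr 1
    exact hybrid_error hsN (fun i => U i j) r ID hID e he heID ptil hp0 ω
  have hvar : ∀ j, ∑ i, ptil i * (μ j - X j i) ^ 2 ≤ ∑ i, ptil i * X j i ^ 2 := by
    intro j
    have : ∑ i, ptil i * (μ j - X j i) ^ 2 = ∑ i, ptil i * X j i ^ 2 - μ j ^ 2 := by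
      have h : ∀ i, ptil i * (μ j - X j i) ^ 2
          = ptil i * μ j ^ 2 - ptil i * X j i * (2 * μ j) + ptil i * X j i ^ 2 := by
        intro i; ring
      rw [Finset.sum_congr rfl fun i _ => h i, Finset.sum_add_distrib, Finset.sum_sub_distrib,
        ← Finset.sum_mul, ← Finset.sum_mul, hmean, hp1]
      ring
    rw [this]
    linarith [sq_nonneg (μ j)]
  -- The sampling probabilities cancel the leverage scores, leaving `ξ * ‖r‖²`.
  have hX2 : ∑ j, ∑ i, ptil i * X j i ^ 2 ≤ ξ * vnorm r ^ 2 := by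
    have h : ∀ i ∈ IDᶜ, ∑ j, ptil i * X j i ^ 2 ≤ ξ * r i ^ 2 := by
      intro i hi
      by_cases h : ptil i = 0
      · simp only [h, zero_mul, Finset.sum_const_zero]
        positivity
      · have h1 : ∀ j, ptil i * X j i ^ 2 = U i j ^ 2 * (r i ^ 2 / ptil i) := by
          intro j
          simp only [hX]
          field_simp
        have h2 : ∑ j, U i j ^ 2 = ξ * ptil i := by
          rw [hpc i hi]
          field_simp
        rw [Finset.sum_congr rfl fun j _ => h1 j, ← Finset.sum_mul, h2]
        apply le_of_eq
        field_simp
    calc ∑ j, ∑ i, ptil i * X j i ^ 2 = ∑ i ∈ IDᶜ, ∑ j, ptil i * X j i ^ 2 := by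
          rw [Finset.sum_comm]
          simp only [← Finset.mul_sum]
          exact hsplit _
      _ ≤ ∑ i ∈ IDᶜ, ξ * r i ^ 2 := Finset.sum_le_sum h
      _ ≤ ∑ i, ξ * r i ^ 2 := Finset.sum_le_sum_of_subset_of_nonneg (Finset.subset_univ _)
          fun i _ _ => by positivity
      _ = ξ * vnorm r ^ 2 := by rw [vnorm_sq, Finset.mul_sum]
  have hE : ∑ ω : Fin sR → Fin m, (∏ t, ptil (ω t)) *
      (∑ j, (1 / (sR : ℝ)) ^ 2 * (∑ t, (μ j - X j (ω t))) ^ 2)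
      ≤ δ * (εr * vnorm r ^ 2 / 2) := by
    calc _ = ∑ j, (1 / (sR : ℝ)) ^ 2 *
            ∑ ω : Fin sR → Fin m, (∏ t, ptil (ω t)) * (∑ t, (μ j - X j (ω t))) ^ 2 := by
          simp only [Finset.mul_sum]
          rw [Finset.sum_comm]
          refine Finset.sum_congr rfl fun j _ => Finset.sum_congr rfl fun ω _ => ?_
          ring
      _ = ∑ j, (1 / (sR : ℝ)) * ∑ i, ptil i * (μ j - X j i) ^ 2 := by
          refine Finset.sum_congr rfl fun j _ => ?_
          rw [draw_second_moment ptil (fun i => μ j - X j i) hp1 ?_ sR]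
          · field_simp
          · simp only [mul_sub, Finset.sum_sub_distrib, hmean, ← Finset.sum_mul, hp1]
            ring
      _ ≤ ∑ j, (1 / (sR : ℝ)) * ∑ i, ptil i * X j i ^ 2 := by
          exact Finset.sum_le_sum fun j _ =>
            mul_le_mul_of_nonneg_left (hvar j) (by positivity)
      _ = (1 / (sR : ℝ)) * ∑ j, ∑ i, ptil i * X j i ^ 2 := by rw [Finset.mul_sum]
      _ ≤ (1 / (sR : ℝ)) * (ξ * vnorm r ^ 2) := by gcongr
      _ ≤ δ * (εr * vnorm r ^ 2 / 2) := by
          have h : 2 * ξ ≤ sR * (δ * εr) := (div_le_iff₀ (by positivity)).mp hsR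
          rw [one_div, inv_mul_le_iff₀ hsR0]
          nlinarith [mul_le_mul_of_nonneg_right h (sq_nonneg (vnorm r))]
  simp only [herr]
  rcases (sq_nonneg (vnorm r)).eq_or_lt with h0 | hpos
  · -- A zero residual has zero error for every draw, so Markov's inequality is not needed.
    have hr0 : ∀ i, r i = 0 := by
      intro i
      rw [vnorm_sq] at h0
      have := (Finset.sum_eq_zero_iff_of_nonneg fun j _ => sq_nonneg (r j)).mp h0.symm i
        (Finset.mem_univ i)
      exact pow_eq_zero_iff two_ne_zero |>.mp this
    have hμ0 : ∀ j, μ j = 0 := fun j => by simp [hμ, hr0]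
    have hX0 : ∀ j i, X j i = 0 := fun j i => by simp [hX, hr0]
    simp only [hμ0, hX0, ← h0, prob]
    simp [draw_mass ptil hp1, hδ0.le]
  · exact prob_ge_of_mean_le ptil hp0 hp1 _
      (fun ω => Finset.sum_nonneg fun _ _ => by positivity) _ δ (by positivity) hE
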